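/- arXiv:1506.01806 — 2 statements merged into one kernel-verified Lean document; each statement's English description precedes it below -/
import Mathlib

section
/- Let H be a complex Hilbert space and N a bounded normal operator on H (i.e. N commutes with its adjoint). Then Stab(N) = { x ∈ H : ‖Nⁿ x‖ → 0 as n → ∞ } is a closed linear subspace of H. -/
open Filter Topology

noncomputable section

/-!
A normal operator satisfies `‖N x‖² ≤ ‖x‖ ‖N² x‖`, so by AM-GM `n ↦ ‖Nⁿ x‖` is a convex sequence.
A convex sequence that is bounded above decreases, hence every `Nⁿ` is a contraction on `Stab N`,
and by continuity on its closure. The powers of `N` are therefore equicontinuous on that closure,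
where pointwise convergence to zero is then a closed condition.
-/

theorem antitone_of_two_mul_le_add_of_bddAbove {a : ℕ → ℝ}
    (hconvex : ∀ n, 2 * a (n + 1) ≤ a n + a (n + 2)) (hbdd : BddAbove (Set.range a)) :
    Antitone a := by
  refine antitone_nat_of_succ_le fun m => ?_
  by_contra! hlt
  have hdiff : Monotone fun n => a (n + 1) - a n :=
    monotone_nat_of_le_succ fun n => by linarith [hconvex n]
  have hlinear (k : ℕ) : a m + k * (a (m + 1) - a m) ≤ a (m + k) := by
    induction k with
    | zero => simp
    | succ k ih =>
      have hstep : a (m + 1) - a m ≤ a (m + k + 1) - a (m + k) := hdiff (Nat.le_add_right m k)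
      push_cast
      rw [← add_assoc]
      linarith
  obtain ⟨B, hB⟩ := hbdd
  obtain ⟨k, hk⟩ := exists_lt_nsmul (sub_pos.2 hlt) (B - a m)
  rw [nsmul_eq_mul] at hk
  linarith [hlinear k, hB (Set.mem_range_self (m + k))]

/-- The subspace `Stab T` of vectors whose orbit under the powers of `T` tends to zero. The
convergence is stated in the topology of `M`, which for a normed space amounts to `‖Tⁿ x‖ → 0`. -/
def stableSubspace {R M : Type*} [Semiring R] [AddCommMonoid M] [Module R M] [TopologicalSpace M]
    [ContinuousAdd M] [ContinuousConstSMul R M] (T : M →L[R] M) : Submodule R M where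
  carrier := {x | Tendsto (fun n : ℕ => (T ^ n) x) atTop (𝓝 0)}
  zero_mem' := by simp [tendsto_const_nhds]
  add_mem' hx hy := by
    simpa only [Set.mem_ofPred_eq, map_add, add_zero] using Tendsto.add hx hy
  smul_mem' c _ hx := by
    simpa only [Set.mem_ofPred_eq, map_smul, smul_zero] using Tendsto.const_smul hx c

section NormedModule

variable {R M : Type*} [Ring R] [SeminormedAddCommGroup M] [Module R M]

theorem norm_pow_apply_le_of_bddAbove {T : M →L[R] M}
    (hT : ∀ x, 2 * ‖T x‖ ≤ ‖x‖ + ‖T (T x)‖) {x : M}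
    (hx : BddAbove (Set.range fun n : ℕ => ‖(T ^ n) x‖)) (n : ℕ) : ‖(T ^ n) x‖ ≤ ‖x‖ := by
  have hanti : Antitone fun k : ℕ => ‖(T ^ k) x‖ :=
    antitone_of_two_mul_le_add_of_bddAbove
      (fun k => by simpa only [pow_succ', mul_apply_eq_comp] using hT ((T ^ k) x)) hx
  simpa using hanti n.zero_le

variable [ContinuousConstSMul R M]

theorem coe_stableSubspace (T : M →L[R] M) :
    (stableSubspace T : Set M) = {x | Tendsto (fun n : ℕ => ‖(T ^ n) x‖) atTop (𝓝 0)} :=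
  Set.ext fun _ => tendsto_zero_iff_norm_tendsto_zero

theorem isClosed_stableSubspace_of_norm_pow_apply_le {T : M →L[R] M} {C : ℝ}
    (hC : ∀ x ∈ stableSubspace T, ∀ n : ℕ, ‖(T ^ n) x‖ ≤ C * ‖x‖) :
    IsClosed (stableSubspace T : Set M) := by
  let K := (stableSubspace T).topologicalClosure
  have hbound (n : ℕ) (z : K) : ‖(T ^ n) z‖ ≤ C * ‖z‖ :=
    closure_minimal (fun x hx => hC x hx n)
      (isClosed_le (T ^ n).continuous.norm (continuous_const.mul continuous_norm)) z.2
  have hequicont : Equicontinuous fun (n : ℕ) (z : K) => (T ^ n) (z : M) :=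
    (LipschitzWith.uniformEquicontinuous _ C.toNNReal fun n =>
      AddMonoidHomClass.lipschitz_of_bound ((T ^ n).comp K.subtypeL) C (hbound n)).equicontinuous
  have hclosed : IsClosed ((↑) ⁻¹' (stableSubspace T : Set M) : Set K) :=
    hequicont.isClosed_setOfPred_tendsto continuous_const
  have hembed : IsClosedEmbedding ((↑) : K → M) :=
    (stableSubspace T).isClosed_topologicalClosure.isClosedEmbedding_subtypeVal
  have hrange : (stableSubspace T : Set M) ⊆ Set.range ((↑) : K → M) :=
    fun x hx => ⟨⟨x, (stableSubspace T).le_topologicalClosure hx⟩, rfl⟩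
  exact (hembed.isClosed_iff_preimage_isClosed hrange).2 hclosed

theorem stab_of_normal_closed_subspace_general (T : M →L[R] M)
    (hT : ∀ x, 2 * ‖T x‖ ≤ ‖x‖ + ‖T (T x)‖) :
    ∃ K : Submodule R M,
      (K : Set M) = {x : M | Tendsto (fun n : ℕ => ‖(T ^ n) x‖) atTop (𝓝 0)} ∧
      IsClosed (K : Set M) := by
  refine ⟨stableSubspace T, coe_stableSubspace T,
    isClosed_stableSubspace_of_norm_pow_apply_le (C := 1) fun x hx n => ?_⟩
  rw [one_mul]
  exact norm_pow_apply_le_of_bddAbove hT (Tendsto.norm hx).bddAbove_range n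

end NormedModule

theorem norm_apply_sq_le_of_norm_adjoint_le {𝕜 E : Type*} [RCLike 𝕜] [NormedAddCommGroup E]
    [InnerProductSpace 𝕜 E] [CompleteSpace E] {T : E →L[𝕜] E}
    (hT : ∀ x, ‖ContinuousLinearMap.adjoint T x‖ ≤ ‖T x‖) (x : E) :
    ‖T x‖ ^ 2 ≤ ‖x‖ * ‖T (T x)‖ :=
  calc ‖T x‖ ^ 2 = RCLike.re (inner 𝕜 x (ContinuousLinearMap.adjoint T (T x))) :=
        T.apply_norm_sq_eq_inner_adjoint_right x
    _ ≤ ‖x‖ * ‖ContinuousLinearMap.adjoint T (T x)‖ := re_inner_le_norm _ _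
    _ ≤ ‖x‖ * ‖T (T x)‖ := by gcongr; exact hT (T x)

theorem stab_of_normal_closed_subspace
    {H : Type*} [NormedAddCommGroup H] [InnerProductSpace ℂ H] [CompleteSpace H]
    (N : H →L[ℂ] H)
    (hN : N ∘L ContinuousLinearMap.adjoint N = ContinuousLinearMap.adjoint N ∘L N) :
    ∃ K : Submodule ℂ H,
      (K : Set H) = {x : H | Tendsto (fun n : ℕ => ‖(N ^ n) x‖) atTop (𝓝 0)} ∧
      IsClosed (K : Set H) := by
  have hnorm := ContinuousLinearMap.isStarNormal_iff_norm_eq_adjoint.1 ⟨hN.symm⟩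
  exact stab_of_normal_closed_subspace_general N fun x =>
    two_mul_le_add_of_sq_le_mul (norm_nonneg _) (norm_nonneg _)
      (norm_apply_sq_le_of_norm_adjoint_le (fun y => (hnorm y).ge) x)
end
end

section
/- Let H be a nontrivial complex Hilbert space and N a bounded normal operator on H with N ≠ 0. Suppose that for every c > 0 the set Stab(c • N) = { x ∈ H : cⁿ · ‖Nⁿ x‖ → 0 as n → ∞ } is either {0} or dense in H. Then there exists r > 0 such that N* ∘ N = r² • (identity); equivalently, (1/r) • N is a unitary operator. -/
open Filter Topology

noncomputable section

/-!
Let `N` be quasinormal, i.e. commute with `A = N⋆ N`. Then `(N ^ n)⋆ N ^ n = A ^ n`, so that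
`‖N ^ n z‖` is governed by `A`. If `A` had two spectral values `s < t`, rescale `N` so that
`s < 1 < t`. For a continuous `f` with `f s ≠ 0` vanishing on `[r ^ 2, ∞)` for some `r < 1`, the
powers of `N` contract the range of `f(A)` geometrically, so `Stab N ≠ {0}`. For a continuous `g`
with `g t ≠ 0` vanishing on `(-∞, 1]`, the powers of `N` do not shrink vectors in the range of
`g(A)`; as `g(A)` commutes with `N`, it vanishes on `Stab N`, which is therefore not dense. Hence
the spectrum of `A` is a single point and `A` is a scalar.
-/

section StableSet

variable {𝕜 E : Type*} [NontriviallyNormedField 𝕜] [SeminormedAddCommGroup E] [NormedSpace 𝕜 E]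

/-- The stable set `Stab T` of a bounded operator: the vectors whose orbit under `T` tends to zero
in norm. -/
def stableSet (T : E →L[𝕜] E) : Set E :=
  {x | Tendsto (fun n : ℕ ↦ ‖(T ^ n) x‖) atTop (𝓝 0)}

theorem stableSet_smul {𝕂 : Type*} [NormedField 𝕂] [NormedSpace 𝕂 E] [SMulCommClass 𝕜 𝕂 E]
    [SMul 𝕂 𝕜] [IsScalarTower 𝕂 𝕜 E] (c : 𝕂) (T : E →L[𝕜] E) :
    stableSet (c • T) = {x | Tendsto (fun n : ℕ ↦ ‖c‖ ^ n * ‖(T ^ n) x‖) atTop (𝓝 0)} := by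
  simp only [stableSet, smul_pow, smul_apply, norm_smul, norm_pow]

theorem mem_stableSet_of_norm_pow_apply_le {T : E →L[𝕜] E} {x : E} {r C : ℝ} (hr0 : 0 ≤ r)
    (hr1 : r < 1) (h : ∀ n : ℕ, ‖(T ^ n) x‖ ≤ r ^ n * C) : x ∈ stableSet T := by
  refine squeeze_zero (fun n ↦ norm_nonneg _) h ?_
  simpa using (tendsto_pow_atTop_nhds_zero_of_lt_one hr0 hr1).mul_const C

theorem apply_mem_stableSet_of_commute {S T : E →L[𝕜] E} (hST : Commute S T) {x : E}
    (hx : x ∈ stableSet T) : S x ∈ stableSet T := by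
  have hlim : Tendsto (fun n : ℕ ↦ ‖S‖ * ‖(T ^ n) x‖) atTop (𝓝 0) := by
    simpa using Tendsto.const_mul ‖S‖ hx
  refine squeeze_zero (fun n ↦ norm_nonneg _) (fun n ↦ ?_) hlim
  have hswap : (T ^ n) (S x) = S ((T ^ n) x) := DFunLike.congr_fun (hST.pow_right n).eq.symm x
  exact hswap ▸ S.le_opNorm _

end StableSet

theorem eq_zero_of_mem_stableSet_of_norm_le {𝕜 E : Type*} [NontriviallyNormedField 𝕜]
    [NormedAddCommGroup E] [NormedSpace 𝕜 E] {T : E →L[𝕜] E} {x : E} (hx : x ∈ stableSet T)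
    (h : ∀ n : ℕ, ‖x‖ ≤ ‖(T ^ n) x‖) : x = 0 :=
  norm_le_zero_iff.1 (ge_of_tendsto' hx h)

theorem norm_apply_le_of_adjoint_comp_self_le {𝕜 E F G : Type*} [RCLike 𝕜]
    [NormedAddCommGroup E] [InnerProductSpace 𝕜 E] [CompleteSpace E]
    [NormedAddCommGroup F] [InnerProductSpace 𝕜 F] [CompleteSpace F]
    [NormedAddCommGroup G] [InnerProductSpace 𝕜 G] [CompleteSpace G]
    {S : E →L[𝕜] F} {T : E →L[𝕜] G}
    (h : ContinuousLinearMap.adjoint S ∘L S ≤ ContinuousLinearMap.adjoint T ∘L T) (x : E) :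
    ‖S x‖ ≤ ‖T x‖ := by
  have hpos := ((ContinuousLinearMap.le_def _ _).1 h).re_inner_nonneg_left x
  rw [sub_apply, inner_sub_left, map_sub,
    ← S.apply_norm_sq_eq_inner_adjoint_left, ← T.apply_norm_sq_eq_inner_adjoint_left,
    sub_nonneg] at hpos
  exact le_of_sq_le_sq hpos (norm_nonneg _)

theorem star_pow_mul_pow_of_commute {M : Type*} [Monoid M] [StarMul M] {a : M}
    (ha : Commute (star a * a) a) (n : ℕ) : star (a ^ n) * a ^ n = (star a * a) ^ n := by
  induction n with
  | zero => simp
  | succ n ih =>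
    calc star (a ^ (n + 1)) * a ^ (n + 1)
        = star (a ^ n) * ((star a * a) * a ^ n) := by
          rw [pow_succ' a, star_mul]
          simp only [mul_assoc]
      _ = (star a * a) ^ (n + 1) := by
          rw [(ha.pow_right n).eq, ← mul_assoc, ih, pow_succ]

section FunctionalCalculus

variable {A : Type*} [CStarAlgebra A]

theorem cfc_ne_zero_of_mem_spectrum {a : A} (ha : IsSelfAdjoint a) {f : ℝ → ℝ}
    (hf : ContinuousOn f (spectrum ℝ a)) {s : ℝ} (hs : s ∈ spectrum ℝ a) (hfs : f s ≠ 0) :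
    cfc f a ≠ 0 := by
  intro h
  rw [← cfc_zero ℝ a] at h
  exact hfs (eqOn_of_cfc_eq_cfc h hf continuousOn_const ha hs)

theorem star_pow_mul_cfc_mul_self {a : A} (ha : Commute (star a * a) a) {f : ℝ → ℝ}
    (hf : ContinuousOn f (spectrum ℝ (star a * a))) (n : ℕ) :
    star (a ^ n * cfc f (star a * a)) * (a ^ n * cfc f (star a * a)) =
      cfc (fun x ↦ x ^ n * f x ^ 2) (star a * a) := by
  set b := star a * a
  have hb : IsSelfAdjoint b := .star_mul_self a
  have hfb : IsSelfAdjoint (cfc f b) := cfc_predicate f b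
  calc star (a ^ n * cfc f b) * (a ^ n * cfc f b)
      = cfc f b * (star (a ^ n) * a ^ n) * cfc f b := by
        rw [star_mul, hfb.star_eq]
        simp only [mul_assoc]
    _ = cfc f b * cfc (fun x : ℝ ↦ x ^ n) b * cfc f b := by
        rw [star_pow_mul_pow_of_commute ha, cfc_pow_id b n]
    _ = cfc (fun x : ℝ ↦ x ^ n) b * cfc f b ^ 2 := by
        rw [(cfc_commute_cfc f (fun x : ℝ ↦ x ^ n) b).eq, mul_assoc, sq]
    _ = cfc (fun x ↦ x ^ n * f x ^ 2) b := by
        rw [cfc_mul (fun x : ℝ ↦ x ^ n) (fun x ↦ f x ^ 2) b, cfc_pow f 2 b]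

end FunctionalCalculus

section Quasinormal

variable {H : Type*} [NormedAddCommGroup H] [InnerProductSpace ℂ H] [CompleteSpace H]
  {T : H →L[ℂ] H}

theorem norm_pow_cfc_apply_le_norm_pow_cfc_apply (hT : Commute (star T * T) T) {f g : ℝ → ℝ}
    (hf : ContinuousOn f (spectrum ℝ (star T * T)))
    (hg : ContinuousOn g (spectrum ℝ (star T * T))) {m n : ℕ}
    (hfg : ∀ x ∈ spectrum ℝ (star T * T), x ^ m * f x ^ 2 ≤ x ^ n * g x ^ 2) (z : H) :
    ‖(T ^ m) (cfc f (star T * T) z)‖ ≤ ‖(T ^ n) (cfc g (star T * T) z)‖ := by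
  have hle : star (T ^ m * cfc f (star T * T)) * (T ^ m * cfc f (star T * T)) ≤
      star (T ^ n * cfc g (star T * T)) * (T ^ n * cfc g (star T * T)) := by
    rw [star_pow_mul_cfc_mul_self hT hf, star_pow_mul_cfc_mul_self hT hg]
    exact cfc_mono hfg
  exact norm_apply_le_of_adjoint_comp_self_le hle z

theorem norm_pow_cfc_apply_le (hT : Commute (star T * T) T) {f : ℝ → ℝ}
    (hf : ContinuousOn f (spectrum ℝ (star T * T))) {r : ℝ} (hr : 0 ≤ r)
    (hfr : ∀ x, r ^ 2 ≤ x → f x = 0) (n : ℕ) (z : H) :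
    ‖(T ^ n) (cfc f (star T * T) z)‖ ≤ r ^ n * ‖cfc f (star T * T) z‖ := by
  have hle : ∀ x ∈ spectrum ℝ (star T * T), x ^ n * f x ^ 2 ≤ x ^ 0 * (r ^ n * f x) ^ 2 := by
    intro x hx
    have hx0 : 0 ≤ x := spectrum_nonneg_of_nonneg (star_mul_self_nonneg T) hx
    rw [pow_zero, one_mul, mul_pow, pow_right_comm]
    rcases le_total (r ^ 2) x with h | h
    · simp [hfr x h]
    · gcongr
  calc ‖(T ^ n) (cfc f (star T * T) z)‖
      ≤ ‖(T ^ 0) (cfc (fun x ↦ r ^ n * f x) (star T * T) z)‖ :=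
        norm_pow_cfc_apply_le_norm_pow_cfc_apply hT hf (by fun_prop) hle z
    _ = r ^ n * ‖cfc f (star T * T) z‖ := by
        rw [cfc_const_mul (r ^ n) f (star T * T), pow_zero, one_apply_eq_self,
          smul_apply, norm_smul_of_nonneg (by positivity)]

theorem norm_cfc_apply_le_norm_pow_cfc_apply (hT : Commute (star T * T) T) {f : ℝ → ℝ}
    (hf : ContinuousOn f (spectrum ℝ (star T * T))) (hf1 : ∀ x, x ≤ 1 → f x = 0)
    (n : ℕ) (z : H) :
    ‖cfc f (star T * T) z‖ ≤ ‖(T ^ n) (cfc f (star T * T) z)‖ := by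
  refine norm_pow_cfc_apply_le_norm_pow_cfc_apply hT (m := 0) hf hf (fun x _ ↦ ?_) z
  rcases le_total x 1 with h | h
  · simp [hf1 x h]
  · rw [pow_zero]
    gcongr
    exact one_le_pow₀ h

theorem one_le_of_mem_spectrum_of_stableSet_eq_zero (hT : Commute (star T * T) T)
    (hstab : stableSet T = {0}) {s : ℝ} (hs : s ∈ spectrum ℝ (star T * T)) : 1 ≤ s := by
  by_contra! hs1
  obtain ⟨r, hsr, hr1⟩ : ∃ r, √s < r ∧ r < 1 :=
    exists_between ((Real.sqrt_lt' one_pos).2 (by simpa using hs1))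
  have hr0 : 0 < r := (Real.sqrt_nonneg s).trans_lt hsr
  let f : ℝ → ℝ := fun x ↦ max (r ^ 2 - x) 0
  have hf : ContinuousOn f (spectrum ℝ (star T * T)) := by fun_prop
  have hfs : f s ≠ 0 := (lt_max_of_lt_left (sub_pos.2 ((Real.sqrt_lt' hr0).1 hsr))).ne'
  have hfr (x : ℝ) (hx : r ^ 2 ≤ x) : f x = 0 := max_eq_right (sub_nonpos.2 hx)
  refine cfc_ne_zero_of_mem_spectrum (.star_mul_self T) hf hs hfs (ContinuousLinearMap.ext ?_)
  intro z
  exact hstab.subset <| mem_stableSet_of_norm_pow_apply_le hr0.le hr1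
    fun n ↦ norm_pow_cfc_apply_le hT hf hr0.le hfr n z

theorem le_one_of_mem_spectrum_of_dense_stableSet (hT : Commute (star T * T) T)
    (hstab : Dense (stableSet T)) {t : ℝ} (ht : t ∈ spectrum ℝ (star T * T)) : t ≤ 1 := by
  by_contra! ht1
  let g : ℝ → ℝ := fun x ↦ max (x - 1) 0
  have hg : ContinuousOn g (spectrum ℝ (star T * T)) := by fun_prop
  have hgt : g t ≠ 0 := (lt_max_of_lt_left (sub_pos.2 ht1)).ne'
  have hg1 (x : ℝ) (hx : x ≤ 1) : g x = 0 := max_eq_right (sub_nonpos.2 hx)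
  let G : H →L[ℂ] H := cfc g (star T * T)
  have hcomm : Commute G T := hT.cfc_real g
  have hzero : Set.EqOn G (0 : H →L[ℂ] H) (stableSet T) := fun y hy ↦
    eq_zero_of_mem_stableSet_of_norm_le (apply_mem_stableSet_of_commute hcomm hy)
      fun n ↦ norm_cfc_apply_le_norm_pow_cfc_apply hT hg hg1 n y
  exact cfc_ne_zero_of_mem_spectrum (.star_mul_self T) hg ht hgt <| DFunLike.coe_injective <|
    Continuous.ext_on hstab G.continuous (0 : H →L[ℂ] H).continuous hzero

theorem spectrum_star_mul_self_subsingleton (hT : Commute (star T * T) T)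
    (hstab : ∀ c : ℝ, 0 < c → stableSet (c • T) = {0} ∨ Dense (stableSet (c • T))) :
    (spectrum ℝ (star T * T)).Subsingleton := by
  have hle : ∀ s ∈ spectrum ℝ (star T * T), ∀ t ∈ spectrum ℝ (star T * T), t ≤ s := by
    intro s hs t ht
    by_contra! hst
    obtain ⟨u, hsu, hut⟩ := exists_between hst
    have hu : 0 < u :=
      (spectrum_nonneg_of_nonneg (star_mul_self_nonneg T) hs).trans_lt hsu
    set c : ℝ := √u⁻¹
    have hc : 0 < c := Real.sqrt_pos.2 (inv_pos.2 hu)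
    have hsmul : star (c • T) * (c • T) = u⁻¹ • (star T * T) := by
      rw [star_smul, star_trivial, smul_mul_smul_comm, Real.mul_self_sqrt (by positivity)]
    have hcT : Commute (star (c • T) * (c • T)) (c • T) :=
      hsmul ▸ (hT.smul_left _).smul_right _
    have hmem {x : ℝ} (hx : x ∈ spectrum ℝ (star T * T)) :
        u⁻¹ * x ∈ spectrum ℝ (star (c • T) * (c • T)) :=
      hsmul ▸ spectrum.smul_mem_smul_iff (r := Units.mk0 u⁻¹ (inv_ne_zero hu.ne')).2 hx
    rcases hstab c hc with hzero | hdense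
    · have h1 := one_le_of_mem_spectrum_of_stableSet_eq_zero hcT hzero (hmem hs)
      exact hsu.not_ge ((one_le_inv_mul₀ hu).1 h1)
    · have h1 := le_one_of_mem_spectrum_of_dense_stableSet hcT hdense (hmem ht)
      exact hut.not_ge ((inv_mul_le_one₀ hu).1 h1)
  exact fun s hs t ht ↦ le_antisymm (hle t ht s hs) (hle s hs t ht)

end Quasinormal

theorem normal_with_dichotomy_is_multiple_of_unitary_general
    {H : Type*} [NormedAddCommGroup H] [InnerProductSpace ℂ H] [CompleteSpace H]
    {N : H →L[ℂ] H} (hN : Commute (star N * N) N) (hN0 : N ≠ 0)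
    (hstab : ∀ c : ℝ, 0 < c → stableSet (c • N) = {0} ∨ Dense (stableSet (c • N))) :
    ∃ r : ℝ, 0 < r ∧
      ContinuousLinearMap.adjoint N ∘L N = ((r : ℂ) ^ 2) • (1 : H →L[ℂ] H) := by
  have := nontrivial_of_ne N 0 hN0
  have hA : IsSelfAdjoint (star N * N) := .star_mul_self N
  obtain ⟨s, hs⟩ : ∃ s, spectrum ℝ (star N * N) = {s} :=
    Set.exists_eq_singleton_iff_nonempty_subsingleton.2
      ⟨ContinuousFunctionalCalculus.spectrum_nonempty _ hA,
        spectrum_star_mul_self_subsingleton hN hstab⟩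
  have hscalar : star N * N = algebraMap ℝ (H →L[ℂ] H) s :=
    CFC.eq_algebraMap_of_spectrum_subset_singleton _ s hs.subset hA
  have hs_nonneg : 0 ≤ s :=
    spectrum_nonneg_of_nonneg (star_mul_self_nonneg N) (hs ▸ Set.mem_singleton s)
  have hs_ne : s ≠ 0 := by
    rintro rfl
    exact hN0 ((CStarRing.star_mul_self_eq_zero_iff N).1 (hscalar.trans (map_zero _)))
  refine ⟨√s, Real.sqrt_pos.2 (hs_nonneg.lt_of_ne' hs_ne), hscalar.trans ?_⟩
  rw [← Complex.ofReal_pow, Real.sq_sqrt hs_nonneg, Complex.coe_smul,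
    Algebra.algebraMap_eq_smul_one]

theorem normal_with_dichotomy_is_multiple_of_unitary
    {H : Type*} [NormedAddCommGroup H] [InnerProductSpace ℂ H] [CompleteSpace H]
    [Nontrivial H]
    (N : H →L[ℂ] H)
    (hNormal : N ∘L ContinuousLinearMap.adjoint N = ContinuousLinearMap.adjoint N ∘L N)
    (hN0 : N ≠ 0)
    (hStab : ∀ c : ℝ, 0 < c →
      ({x : H | Tendsto (fun n : ℕ => c ^ n * ‖(N ^ n) x‖) atTop (𝓝 0)} = {0} ∨
        Dense {x : H | Tendsto (fun n : ℕ => c ^ n * ‖(N ^ n) x‖) atTop (𝓝 0)})) :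
    ∃ r : ℝ, 0 < r ∧
      ContinuousLinearMap.adjoint N ∘L N = ((r : ℂ) ^ 2) • (1 : H →L[ℂ] H) := by
  refine normal_with_dichotomy_is_multiple_of_unitary_general
    (.mul_left hNormal.symm (.refl N)) hN0 fun c hc ↦ ?_
  simpa only [stableSet_smul, Real.norm_of_nonneg hc.le] using hStab c hc
end
end
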